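/- Let R be a commutative ℚ-algebra, let r ≥ 3 be an integer, and set a(r) = −(1/2880)(r−1)(r−3)(r²−4r−6) and b(r) = (1/480)(2r²−3). Let q_1, q_2, q_3, … be any sequence of elements of R, define C_0 = 1 and C_m = Σ_{μ ⊢ m} Π_{i≥1} q_i^{m_i(μ)}/m_i(μ)! for m ≥ 1, and define g_2(μ) = (1/8640)(8·p_2(μ)·p_1(μ)² + p_1(μ)⁴ + 48·p_2(μ)·p_1(μ) + 12·p_1(μ)³ + 60·p_2(μ) + 45·p_1(μ)² + 54·p_1(μ)). Then Σ_{(i,j,k)∈ℕ³, i+j+k=r−3} (a(r) + b(r)·i²) · C_i·C_j·C_k = Σ_{μ ⊢ r−3} 3^{ℓ(μ)} · g_2(μ) · Π_{i≥1} q_i^{m_i(μ)}/m_i(μ)!. -/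

import Mathlib

/-! The generating series `C(t) = ∑ C_m t^m` is `exp q(t)` with `q(t) = ∑ q_i t^i`, and more generally
`F_c(t) = ∑_μ c^{ℓ(μ)} Q_μ t^{|μ|} = exp (c q(t))`, where `Q_μ = ∏ q_i^{m_i(μ)} / m_i(μ)!`.  No
exponential is needed: removing a part `i` from `μ` gives, for every weight `w : ℕ → ℚ`,
`∑_μ (∑_j w(μ_j)) c^{ℓ(μ)} Q_μ t^{|μ|} = c (∑_{i ≥ 1} w(i) q_i t^i) F_c(t)`
(`sum_weighted_eq_coeff`).  Write `D = t d/dt` and `L = D q`.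

* For `w(i) = i` this is the differential equation `D F_c = c L F_c`, which determines `F_c` from its
  constant term `1`; as `F_1 ^ 3` solves the equation with `c = 3`, `F_3 = F_1 ^ 3 = C ^ 3`.
* For `w(i) = i ^ 2` and `c = 3` it says that the series weighted by `p_2(μ)` is `3 (D L) F_3`.

Since `D² C = (D L + L²) C` and `D² F_3 = (3 D L + 9 L²) F_3`, it follows that
`9 (D² C) C² = D² F_3 + 2 · 3 (D L) F_3`, i.e. inserting `i²` in the sum of `C_i C_j C_k` over
`i + j + k = n` amounts to the weight `(n² + 2 p_2(μ)) / 9` on partitions of `n`.  The theorem is then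
the polynomial identity `a(n+3) + b(n+3) (n² + 2 p_2) / 9 = g_2` with `p_1 = n`. -/

open Finset

/-- The Goulden–Rattan coefficient `a(r) = −(1/2880)(r−1)(r−3)(r²−4r−6)`. -/
def aGR (r : ℕ) : ℚ :=
  -(1 / 2880) * ((r : ℚ) - 1) * ((r : ℚ) - 3) * ((r : ℚ) ^ 2 - 4 * (r : ℚ) - 6)

/-- The Goulden–Rattan coefficient `b(r) = (1/480)(2r²−3)`. -/
def bGR (r : ℕ) : ℚ := (1 / 480) * (2 * (r : ℚ) ^ 2 - 3)

/-- The weight function `g₂`, as a function of the first two power sums of its argument. -/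
def g2val (p1 p2 : ℚ) : ℚ :=
  (1 / 8640) * (8 * p2 * p1 ^ 2 + p1 ^ 4 + 48 * p2 * p1 + 12 * p1 ^ 3
    + 60 * p2 + 45 * p1 ^ 2 + 54 * p1)

/-! ### Monomials indexed by multisets and partition sums -/

/-- The finset of multisets underlying the partitions of `n`. -/
def partSet (n : ℕ) : Finset (Multiset ℕ) :=
  (Finset.univ : Finset n.Partition).image Nat.Partition.parts

lemma mem_partSet {n : ℕ} {s : Multiset ℕ} :
    s ∈ partSet n ↔ (∀ i ∈ s, 0 < i) ∧ s.sum = n := by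
  simp only [partSet, Finset.mem_image, Finset.mem_univ, true_and]
  constructor
  · rintro ⟨μ, rfl⟩
    exact ⟨fun i hi => μ.parts_pos hi, μ.parts_sum⟩
  · rintro ⟨h1, h2⟩
    exact ⟨⟨s, fun {i} hi => h1 i hi, h2⟩, rfl⟩

lemma sum_partSet {M : Type*} [AddCommMonoid M] (n : ℕ) (f : Multiset ℕ → M) :
    ∑ s ∈ partSet n, f s = ∑ μ : n.Partition, f μ.parts := by
  rw [partSet, Finset.sum_image]
  intro μ _ ν _ h
  exact Nat.Partition.ext h

section

variable {R : Type*} [CommRing R] [Algebra ℚ R]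

/-- The divided-power monomial `Q_s = ∏ᵢ qᵢ^{mᵢ(s)}/mᵢ(s)!` of a multiset `s`. -/
def multMonomial (q : ℕ → R) (s : Multiset ℕ) : R :=
  ∏ i ∈ s.toFinset, ((s.count i).factorial : ℚ)⁻¹ • q i ^ (s.count i)

lemma multMonomial_eq_of_subset (q : ℕ → R) (s : Multiset ℕ) (T : Finset ℕ)
    (h : s.toFinset ⊆ T) :
    multMonomial q s = ∏ i ∈ T, ((s.count i).factorial : ℚ)⁻¹ • q i ^ (s.count i) := by
  apply Finset.prod_subset h
  intro i _ hi
  have : s.count i = 0 := by simpa using hi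
  simp [this]

lemma multMonomial_cons (q : ℕ → R) (i : ℕ) (s : Multiset ℕ) :
    (((i ::ₘ s).count i : ℕ) : ℚ) • multMonomial q (i ::ₘ s) = q i * multMonomial q s := by
  rw [multMonomial_eq_of_subset q (i ::ₘ s) (insert i s.toFinset) (by simp),
    multMonomial_eq_of_subset q s (insert i s.toFinset) (by simp),
    ← Finset.mul_prod_erase _ _ (Finset.mem_insert_self i s.toFinset),
    ← Finset.mul_prod_erase _ _ (Finset.mem_insert_self i s.toFinset),
    ← smul_mul_assoc, ← mul_assoc]
  congr 1
  · rw [Multiset.count_cons_self, Nat.factorial_succ, smul_smul, mul_smul_comm, pow_succ']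
    congr 1
    have : ((s.count i : ℚ) + 1) ≠ 0 := by positivity
    push_cast
    field_simp
  · apply Finset.prod_congr rfl
    intro j hj
    rw [Multiset.count_cons_of_ne (Finset.ne_of_mem_erase hj)]

/-- `c^{ℓ(s)} Q_s`. -/
def scaledMonomial (q : ℕ → R) (c : ℚ) (s : Multiset ℕ) : R :=
  c ^ s.card • multMonomial q s

lemma scaledMonomial_cons (q : ℕ → R) (c : ℚ) (i : ℕ) (s : Multiset ℕ) :
    (((i ::ₘ s).count i : ℕ) : ℚ) • scaledMonomial q c (i ::ₘ s)
      = c • (q i * scaledMonomial q c s) := by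
  rw [scaledMonomial, smul_comm, multMonomial_cons, scaledMonomial, Multiset.card_cons,
    pow_succ', mul_smul, mul_smul_comm]

open PowerSeries

/-- The series `F_c(t) = ∑_μ c^{ℓ(μ)} Q_μ t^{|μ|}`, i.e. `exp (c q(t))`. -/
noncomputable def partSeries (q : ℕ → R) (c : ℚ) : PowerSeries R :=
  PowerSeries.mk fun n => ∑ s ∈ partSet n, scaledMonomial q c s

/-- The series `∑_{i ≥ 1} w(i) qᵢ tⁱ`; the value `q 0` is discarded. -/
noncomputable def weightSeries (q : ℕ → R) (w : ℕ → ℚ) : PowerSeries R :=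
  PowerSeries.mk fun i => if i = 0 then 0 else w i • q i

/-- Weighting partitions by an additive statistic `∑_j w(μ_j)` multiplies the partition series by
`c ∑ w(i) qᵢ tⁱ`.  Both sides count pairs of a partition of `n` and one of its part sizes `i`; on
the right, one copy of `i` has been removed. -/
lemma sum_weighted_eq_coeff (q : ℕ → R) (c : ℚ) (w : ℕ → ℚ) (n : ℕ) :
    ∑ s ∈ partSet n, (s.map w).sum • scaledMonomial q c s
      = coeff n (c • (weightSeries q w * partSeries q c)) := by
  have hL : ∀ s ∈ partSet n, (s.map w).sum • scaledMonomial q c s =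
      ∑ i ∈ s.toFinset, w i • ((s.count i : ℚ) • scaledMonomial q c s) := by
    intro s _
    rw [Finset.sum_multiset_map_count, Finset.sum_smul]
    refine Finset.sum_congr rfl fun i _ => ?_
    rw [smul_smul, nsmul_eq_mul, mul_comm]
  have hR : coeff n (c • (weightSeries q w * partSeries q c)) =
      ∑ p ∈ (antidiagonal n).filter (fun p => p.1 ≠ 0), ∑ s ∈ partSet p.2,
        w p.1 • (c • (q p.1 * scaledMonomial q c s)) := by
    rw [Finset.sum_filter, PowerSeries.coeff_smul, PowerSeries.coeff_mul, Finset.smul_sum]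
    refine Finset.sum_congr rfl fun p _ => ?_
    by_cases hp : p.1 = 0
    · simp [weightSeries, hp]
    · simp only [weightSeries, partSeries, coeff_mk, hp, if_false, ne_eq, not_false_eq_true,
        if_true, Finset.mul_sum, Finset.smul_sum, smul_mul_assoc]
      exact Finset.sum_congr rfl fun s _ => smul_comm _ _ _
  rw [Finset.sum_congr rfl hL, hR, Finset.sum_sigma', Finset.sum_sigma']
  refine Finset.sum_bij' (fun x _ => ⟨(x.2, n - x.2), x.1.erase x.2⟩)
    (fun y _ => ⟨y.1.1 ::ₘ y.2, y.1.1⟩) ?_ ?_ ?_ ?_ ?_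
  · rintro ⟨s, i⟩ h
    simp only [Finset.mem_sigma, mem_partSet, Multiset.mem_toFinset] at h
    obtain ⟨⟨h1, h2⟩, h3⟩ := h
    have h4 := Multiset.sum_erase h3
    have h5 := h1 i h3
    simp only [Finset.mem_sigma, mem_partSet, Finset.mem_filter, Finset.HasAntidiagonal.mem_antidiagonal]
    exact ⟨⟨by omega, by omega⟩, fun j hj => h1 j (Multiset.mem_of_mem_erase hj), by omega⟩
  · rintro ⟨⟨i, j⟩, s⟩ h
    simp only [Finset.mem_sigma, mem_partSet, Finset.mem_filter, Finset.HasAntidiagonal.mem_antidiagonal] at h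
    obtain ⟨⟨h1, h2⟩, h3, h4⟩ := h
    simp only [Finset.mem_sigma, mem_partSet, Multiset.mem_toFinset, Multiset.mem_cons,
      Multiset.sum_cons, true_or, and_true]
    refine ⟨?_, by omega⟩
    rintro k (rfl | hk)
    · omega
    · exact h3 k hk
  · rintro ⟨s, i⟩ h
    simp only [Finset.mem_sigma, Multiset.mem_toFinset] at h
    simp [Multiset.cons_erase h.2]
  · rintro ⟨⟨i, j⟩, s⟩ h
    simp only [Finset.mem_sigma, Finset.mem_filter, Finset.HasAntidiagonal.mem_antidiagonal] at h
    have : n - i = j := by omega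
    simp [this]
  · rintro ⟨s, i⟩ h
    simp only [Finset.mem_sigma, Multiset.mem_toFinset] at h
    have := scaledMonomial_cons q c i (s.erase i)
    rw [Multiset.cons_erase h.2] at this
    simp only [this]

/-! ### The Euler operator and the differential equation -/

/-- The Euler operator `D = t d/dt` on power series. -/
noncomputable def eulerOp : Derivation R (PowerSeries R) (PowerSeries R) :=
  (X : PowerSeries R) • PowerSeries.derivative R

lemma coeff_eulerOp (f : PowerSeries R) (n : ℕ) :
    coeff n (eulerOp f) = (n : ℚ) • coeff n f := by
  have h : eulerOp f = X * PowerSeries.derivative R f := rfl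
  rw [h]
  cases n with
  | zero => simp
  | succ n =>
    rw [PowerSeries.coeff_succ_X_mul, PowerSeries.coeff_derivative, Algebra.smul_def, mul_comm]
    simp

lemma eulerOp_weightSeries (q : ℕ → R) (w : ℕ → ℚ) :
    eulerOp (weightSeries q w) = weightSeries q (fun i => i * w i) := by
  ext n
  rw [coeff_eulerOp]
  by_cases hn : n = 0 <;> simp [weightSeries, hn, mul_smul]

lemma eulerOp_partSeries (q : ℕ → R) (c : ℚ) :
    eulerOp (partSeries q c) = c • (weightSeries q (fun i => i) * partSeries q c) := by
  ext n
  rw [← sum_weighted_eq_coeff, coeff_eulerOp, partSeries, coeff_mk, Finset.smul_sum]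
  refine Finset.sum_congr rfl fun s hs => ?_
  rw [← (mem_partSet.1 hs).2, Nat.cast_multiset_sum]

lemma partSet_zero : partSet 0 = {0} := by
  ext s
  rw [mem_partSet, Finset.mem_singleton]
  constructor
  · rintro ⟨h1, h2⟩
    refine Multiset.eq_zero_of_forall_notMem fun i hi => ?_
    have := h1 i hi
    have := Multiset.le_sum_of_mem hi
    omega
  · rintro rfl
    simp

lemma coeff_zero_partSeries (q : ℕ → R) (c : ℚ) : coeff 0 (partSeries q c) = 1 := by
  rw [partSeries, coeff_mk, partSet_zero]
  simp [scaledMonomial, multMonomial]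

/-- If `L` has no constant term, a solution of `D f = L f` with zero constant term vanishes. -/
lemma eq_zero_of_eulerOp_eq (L f : PowerSeries R) (hL : coeff 0 L = 0)
    (hf : eulerOp f = L * f) (h0 : coeff 0 f = 0) : f = 0 := by
  ext n
  induction n using Nat.strong_induction_on with
  | _ n ih =>
    rcases Nat.eq_zero_or_pos n with rfl | hn
    · simpa using h0
    have h := congrArg (coeff n) hf
    rw [coeff_eulerOp, PowerSeries.coeff_mul, Finset.sum_eq_zero] at h
    · have hn' : (n : ℚ) ≠ 0 := by positivity
      have h' := congrArg (fun x => (n : ℚ)⁻¹ • x) h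
      simpa [smul_smul, hn'] using h'
    · rintro ⟨i, j⟩ hij
      rw [Finset.HasAntidiagonal.mem_antidiagonal] at hij
      rcases Nat.eq_zero_or_pos i with rfl | hi
      · simp only [hL, zero_mul]
      · simp only at hij
        simp only [ih j (by omega), map_zero, mul_zero]

lemma partSeries_three (q : ℕ → R) : partSeries q 3 = partSeries q 1 ^ 3 := by
  rw [← sub_eq_zero]
  apply eq_zero_of_eulerOp_eq ((3 : ℚ) • weightSeries q (fun i => i))
  · simp [weightSeries]
  · rw [map_sub, eulerOp_partSeries, Derivation.leibniz_pow, eulerOp_partSeries]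
    rw [smul_eq_mul]
    simp only [Algebra.smul_def, nsmul_eq_mul, map_one, map_ofNat]
    push_cast
    ring
  · have h := coeff_zero_partSeries q
    simp only [PowerSeries.coeff_zero_eq_constantCoeff_apply] at h
    simp [h]

/-- `9 (D² C) C² = D² F₃ + 2 · 3 (D L) F₃`, where `C = F₁` and `D L` has coefficients `i² qᵢ`. -/
lemma nine_eulerOp_sq (q : ℕ → R) :
    (9 : ℚ) • (eulerOp (eulerOp (partSeries q 1)) * (partSeries q 1 * partSeries q 1))
      = eulerOp (eulerOp (partSeries q 3))
        + (2 : ℚ) • ((3 : ℚ) • (weightSeries q (fun i => (i : ℚ) * i) * partSeries q 3)) := by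
  have h1 : eulerOp (partSeries q 1) = weightSeries q (fun i => i) * partSeries q 1 := by
    rw [eulerOp_partSeries, one_smul]
  have h3 : eulerOp (partSeries q 3) = 3 * (weightSeries q (fun i => i) * partSeries q 3) := by
    rw [eulerOp_partSeries, Algebra.smul_def, map_ofNat]
  have h3' : eulerOp (3 * (weightSeries q (fun i => i) * partSeries q 3))
      = 3 * eulerOp (weightSeries q (fun i => i) * partSeries q 3) := by
    have h := eulerOp.map_smul (3 : R) (weightSeries q (fun i => i) * partSeries q 3)
    simpa only [Algebra.smul_def, map_ofNat] using h
  rw [← eulerOp_weightSeries, h3, h3', h1, Derivation.leibniz, Derivation.leibniz, h1, h3,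
    partSeries_three]
  simp only [Algebra.smul_def, map_ofNat, Algebra.algebraMap_self, RingHom.id_apply]
  ring

lemma sum_antidiagonalTuple_three (n : ℕ) (a b c : PowerSeries R) :
    ∑ v ∈ Finset.Nat.antidiagonalTuple 3 n,
      coeff (v 0) a * coeff (v 1) b * coeff (v 2) c = coeff n (a * (b * c)) := by
  simp only [PowerSeries.coeff_mul, Finset.mul_sum]
  rw [Finset.sum_sigma']
  refine Finset.sum_bij' (fun v _ => ⟨(v 0, v 1 + v 2), (v 1, v 2)⟩)
    (fun y _ => ![y.1.1, y.2.1, y.2.2]) ?_ ?_ ?_ ?_ ?_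
  · intro v hv
    rw [Finset.Nat.mem_antidiagonalTuple, Fin.sum_univ_three] at hv
    simp only [Finset.mem_sigma, Finset.HasAntidiagonal.mem_antidiagonal, and_true]
    omega
  · rintro ⟨⟨i, j⟩, ⟨k, l⟩⟩ h
    simp only [Finset.mem_sigma, Finset.HasAntidiagonal.mem_antidiagonal] at h
    rw [Finset.Nat.mem_antidiagonalTuple, Fin.sum_univ_three]
    simp
    omega
  · intro v _
    ext i
    fin_cases i <;> rfl
  · rintro ⟨⟨i, j⟩, ⟨k, l⟩⟩ h
    simp only [Finset.mem_sigma, Finset.HasAntidiagonal.mem_antidiagonal] at h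
    simp [h.2]
  · intro v _
    simp only [mul_assoc]

/-- The polynomial identity behind the theorem, with `p₁ = n = r - 3`. -/
lemma aGR_add_bGR (n : ℕ) (p2 : ℚ) :
    aGR (n + 3) + bGR (n + 3) * ((n ^ 2 + 2 * p2) / 9) = g2val n p2 := by
  simp only [aGR, bGR, g2val]
  push_cast
  ring

end

/-- **Theorem 2 (abstract form).** With `C₀ = 1` and
`C_m = ∑_{μ ⊢ m} ∏ᵢ qᵢ^{mᵢ(μ)}/mᵢ(μ)!` for `m ≥ 1`, for any integer `r ≥ 3`:
`∑_{i+j+k=r−3} (a(r) + b(r) i²) Cᵢ Cⱼ C_k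
  = ∑_{μ ⊢ r−3} 3^{ℓ(μ)} g₂(μ) ∏ᵢ qᵢ^{mᵢ(μ)}/mᵢ(μ)!`. -/
theorem goulden_rattan_g2_expansion (R : Type*) [CommRing R] [Algebra ℚ R]
    (r : ℕ) (hr : 3 ≤ r) (q : ℕ → R) (C : ℕ → R) (hC0 : C 0 = 1)
    (hC : ∀ m : ℕ, 1 ≤ m → C m = ∑ μ : m.Partition,
      ∏ i ∈ μ.parts.toFinset,
        (((μ.parts.count i).factorial : ℚ))⁻¹ • q i ^ (μ.parts.count i)) :
    ∑ v ∈ Finset.Nat.antidiagonalTuple 3 (r - 3),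
        (aGR r + bGR r * (v 0 : ℚ) ^ 2) • (C (v 0) * C (v 1) * C (v 2)) =
    ∑ μ : (r - 3).Partition,
      ((3 : ℚ) ^ μ.parts.card *
        g2val (μ.parts.sum : ℚ) (((μ.parts.map (· ^ 2)).sum : ℕ) : ℚ)) •
        ∏ i ∈ μ.parts.toFinset,
          (((μ.parts.count i).factorial : ℚ))⁻¹ • q i ^ (μ.parts.count i) := by
  obtain ⟨n, rfl⟩ : ∃ n, r = n + 3 := ⟨r - 3, by omega⟩
  rw [Nat.add_sub_cancel]
  have hCF : ∀ m, C m = PowerSeries.coeff m (partSeries q 1) := by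
    intro m
    rcases Nat.eq_zero_or_pos m with rfl | hm
    · rw [hC0, coeff_zero_partSeries]
    · rw [hC m hm, partSeries, PowerSeries.coeff_mk, sum_partSet]
      simp only [scaledMonomial, one_pow, one_smul]
      rfl
  have hsum : ∑ v ∈ Finset.Nat.antidiagonalTuple 3 n, C (v 0) * C (v 1) * C (v 2)
      = PowerSeries.coeff n (partSeries q 3) := by
    simp only [hCF]
    rw [sum_antidiagonalTuple_three, partSeries_three]
    congr 1
    ring
  have hsq : ∑ v ∈ Finset.Nat.antidiagonalTuple 3 n,
      ((v 0 : ℕ) : ℚ) ^ 2 • (C (v 0) * C (v 1) * C (v 2))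
      = PowerSeries.coeff n (eulerOp (eulerOp (partSeries q 1)) *
          (partSeries q 1 * partSeries q 1)) := by
    rw [← sum_antidiagonalTuple_three]
    refine Finset.sum_congr rfl fun v _ => ?_
    rw [coeff_eulerOp, coeff_eulerOp, hCF, hCF, hCF, smul_smul, ← pow_two, smul_mul_assoc,
      smul_mul_assoc]
  have hnine := congrArg (PowerSeries.coeff n) (nine_eulerOp_sq q)
  rw [PowerSeries.coeff_smul, map_add, coeff_eulerOp, coeff_eulerOp, PowerSeries.coeff_smul,
    ← sum_weighted_eq_coeff, ← hsq] at hnine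
  have hsq' : ∑ v ∈ Finset.Nat.antidiagonalTuple 3 n,
      ((v 0 : ℕ) : ℚ) ^ 2 • (C (v 0) * C (v 1) * C (v 2))
      = ∑ s ∈ partSet n, (((n : ℚ) ^ 2 + 2 * (s.map fun i : ℕ => (i : ℚ) * i).sum) / 9) •
          scaledMonomial q 3 s := by
    have h := congrArg (fun x => (9 : ℚ)⁻¹ • x) hnine
    simp only [smul_smul] at h
    norm_num at h
    rw [h, partSeries, PowerSeries.coeff_mk]
    simp only [Finset.smul_sum]
    rw [← Finset.sum_add_distrib]
    refine Finset.sum_congr rfl fun s _ => ?_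
    simp only [smul_smul]
    rw [← add_smul]
    congr 1
    ring
  simp only [add_smul, mul_smul]
  rw [Finset.sum_add_distrib, ← Finset.smul_sum, ← Finset.smul_sum, hsum, hsq', partSeries,
    PowerSeries.coeff_mk, Finset.smul_sum, Finset.smul_sum, ← Finset.sum_add_distrib, sum_partSet]
  refine Finset.sum_congr rfl fun μ _ => ?_
  rw [smul_smul, ← add_smul, aGR_add_bGR, smul_comm, μ.parts_sum]
  congr 2
  rw [Nat.cast_multiset_sum, Multiset.map_map]
  simp [pow_two]
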